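/- arXiv:1511.08942 — 2 statements merged into one kernel-verified Lean document; each statement's English description precedes it below -/
import Mathlib

section
/- Let q be a power of an odd prime and d ≥ 1. For every A ⊆ F_q^d, the number of ordered pairs (x, y) ∈ A × A with x·y = 0 is at least |A|²/q − q^{d/2}·|A| (as real numbers, with q^{d/2} the real d/2-th power of q). -/
/-!
Fix a nontrivial additive character `ψ : F → ℂ`. Orthogonality of characters detects the condition
`x · y = 0`, so that `q` times the number of pairs is `∑ s, ∑ x ∈ A, ∑ y ∈ A, ψ (s (x · y))`
(`card_mul_count_eq`). The term `s = 0` contributes `|A|²`. For `s ≠ 0` the matrix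
`(ψ (s (x · y)))` on `F ^ d` has orthogonal rows of squared norm `q ^ d`, which with Cauchy–Schwarz
bounds the inner double sum by `q ^ (d / 2) |A|` (`norm_charSum_le`). There are `q - 1 ≤ q` such
terms, and dividing by `q` gives the claim.
-/

/-- Orthogonality of the characters `x ↦ ψ (s (x · z))` of `F ^ d`. -/
lemma sum_char_dot {F : Type} [Field F] [Fintype F] [DecidableEq F] {d : ℕ} {ψ : AddChar F ℂ}
    (hψ : ψ.IsPrimitive) {s : F} (hs : s ≠ 0) (z : Fin d → F) :
    ∑ x : Fin d → F, ψ (s * ∑ i, x i * z i) = if z = 0 then (Fintype.card F : ℂ) ^ d else 0 := by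
  have h1 : ∀ x : Fin d → F, ψ (s * ∑ i, x i * z i) = ∏ i, ψ (x i * (s * z i)) := by
    intro x
    have h : ∀ t : Finset (Fin d), ψ (∑ i ∈ t, x i * (s * z i)) = ∏ i ∈ t, ψ (x i * (s * z i)) := by
      intro t
      induction t using Finset.induction_on with
      | empty => simp
      | insert i t hi ih => rw [Finset.sum_insert hi, Finset.prod_insert hi, ψ.map_add_eq_mul, ih]
    rw [← h, Finset.mul_sum]
    simp_rw [mul_left_comm s]
  have h2 := Finset.prod_univ_sum (fun _ : Fin d => (Finset.univ : Finset F))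
    (fun i t => ψ (t * (s * z i)))
  rw [Fintype.piFinset_univ] at h2
  simp_rw [h1]
  rw [← h2]
  simp_rw [AddChar.sum_mulShift _ hψ]
  split_ifs with hz
  · simp [hz]
  · obtain ⟨i, hi⟩ := Function.ne_iff.mp hz
    exact Finset.prod_eq_zero (Finset.mem_univ i) (by simpa [hs] using hi)

/-- Plancherel for the indicator function of `A`. -/
lemma sum_normSq_char {F : Type} [Field F] [Fintype F] [DecidableEq F] {d : ℕ} {ψ : AddChar F ℂ}
    (hψ : ψ.IsPrimitive) {s : F} (hs : s ≠ 0) (A : Finset (Fin d → F)) :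
    ∑ x : Fin d → F, ‖∑ y ∈ A, ψ (s * ∑ i, x i * y i)‖ ^ 2
      = (Fintype.card F : ℝ) ^ d * A.card := by
  have key : ∀ x : Fin d → F, ((‖∑ y ∈ A, ψ (s * ∑ i, x i * y i)‖ ^ 2 : ℝ) : ℂ)
      = ∑ y ∈ A, ∑ y' ∈ A, ψ (s * ∑ i, x i * (y - y') i) := by
    intro x
    push_cast
    rw [← Complex.mul_conj', map_sum, Finset.sum_mul_sum]
    refine Finset.sum_congr rfl fun y _ => Finset.sum_congr rfl fun y' _ => ?_
    rw [← AddChar.map_neg_eq_conj, ← AddChar.map_add_eq_mul]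
    congr 1
    simp only [Pi.sub_apply, mul_sub, Finset.sum_sub_distrib]
    ring
  have : ((∑ x : Fin d → F, ‖∑ y ∈ A, ψ (s * ∑ i, x i * y i)‖ ^ 2 : ℝ) : ℂ)
      = (((Fintype.card F : ℝ) ^ d * A.card : ℝ) : ℂ) := by
    rw [Complex.ofReal_sum, Finset.sum_congr rfl fun x _ => key x, Finset.sum_comm]
    have : ∀ y ∈ A, ∑ x : Fin d → F, ∑ y' ∈ A, ψ (s * ∑ i, x i * (y - y') i)
        = (Fintype.card F : ℂ) ^ d := by
      intro y hy
      rw [Finset.sum_comm]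
      simp_rw [sum_char_dot hψ hs, sub_eq_zero]
      simp [hy]
    rw [Finset.sum_congr rfl this]
    simp [mul_comm]
  exact_mod_cast this

lemma norm_charSum_le {F : Type} [Field F] [Fintype F] {d : ℕ} {ψ : AddChar F ℂ}
    (hψ : ψ.IsPrimitive) {s : F} (hs : s ≠ 0) (A : Finset (Fin d → F)) :
    ‖∑ x ∈ A, ∑ y ∈ A, ψ (s * ∑ i, x i * y i)‖
      ≤ (Fintype.card F : ℝ) ^ ((d : ℝ) / 2) * A.card := by
  classical
  have hQ : ((Fintype.card F : ℝ) ^ ((d : ℝ) / 2)) ^ 2 = (Fintype.card F : ℝ) ^ d := by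
    rw [← Real.rpow_natCast, ← Real.rpow_mul (by positivity)]
    norm_num
  refine (norm_sum_le _ _).trans (abs_le_of_sq_le_sq' ?_ (by positivity)).2
  calc (∑ x ∈ A, ‖∑ y ∈ A, ψ (s * ∑ i, x i * y i)‖) ^ 2
      ≤ A.card * ∑ x ∈ A, ‖∑ y ∈ A, ψ (s * ∑ i, x i * y i)‖ ^ 2 := sq_sum_le_card_mul_sum_sq
    _ ≤ A.card * ∑ x : Fin d → F, ‖∑ y ∈ A, ψ (s * ∑ i, x i * y i)‖ ^ 2 := by
        gcongr
        exact Finset.subset_univ A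
    _ = ((Fintype.card F : ℝ) ^ ((d : ℝ) / 2) * A.card) ^ 2 := by
        rw [sum_normSq_char hψ hs, mul_pow, hQ]
        ring

lemma card_mul_count_eq {F : Type} [Field F] [Fintype F] {d : ℕ} {ψ : AddChar F ℂ}
    (hψ : ψ.IsPrimitive) (A : Finset (Fin d → F)) :
    (Fintype.card F : ℂ) * (Nat.card {p : (Fin d → F) × (Fin d → F) |
        p.1 ∈ A ∧ p.2 ∈ A ∧ ∑ i, p.1 i * p.2 i = 0} : ℂ)
      = ∑ s : F, ∑ x ∈ A, ∑ y ∈ A, ψ (s * ∑ i, x i * y i) := by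
  classical
  have hset : {p : (Fin d → F) × (Fin d → F) | p.1 ∈ A ∧ p.2 ∈ A ∧ ∑ i, p.1 i * p.2 i = 0}
      = ((A ×ˢ A).filter fun p => ∑ i, p.1 i * p.2 i = 0 : Finset _) := by
    ext p
    simp [and_assoc]
  rw [hset, Nat.card_coe_set_eq, Set.ncard_coe_finset]
  have hprod : ∀ s : F, ∑ x ∈ A, ∑ y ∈ A, ψ (s * ∑ i, x i * y i)
      = ∑ p ∈ A ×ˢ A, ψ (s * ∑ i, p.1 i * p.2 i) := fun s => by rw [Finset.sum_product]
  rw [Finset.sum_congr rfl fun s _ => hprod s, Finset.sum_comm]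
  simp_rw [AddChar.sum_mulShift _ hψ]
  rw [Finset.card_filter]
  push_cast
  rw [Finset.mul_sum]
  simp

/-- Let `q` be a power of an odd prime and `d ≥ 1`. For every `A ⊆ F_q^d`,
the number of ordered pairs `(x, y) ∈ A × A` with `x·y = 0` is at least
`|A|²/q − q^(d/2) * |A|` (as reals). -/
theorem zero_dot_product_count
    (q d : ℕ) (hq : ∃ p n : ℕ, p.Prime ∧ Odd p ∧ 0 < n ∧ q = p ^ n) (hd : 1 ≤ d)
    (F : Type) [Field F] [Fintype F] (hcard : Fintype.card F = q)
    (A : Finset (Fin d → F)) :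
    (Nat.card {p : (Fin d → F) × (Fin d → F) |
        p.1 ∈ A ∧ p.2 ∈ A ∧ ∑ i, p.1 i * p.2 i = 0} : ℝ) ≥
      (A.card : ℝ) ^ 2 / q - (q : ℝ) ^ ((d : ℝ) / 2) * A.card := by
  classical
  subst hcard
  obtain ⟨ψ, hψ1⟩ := AddChar.exists_apply_ne_zero.2 (one_ne_zero : (1 : F) ≠ 0)
  have hψ : ψ.IsPrimitive := AddChar.IsPrimitive.of_ne_one fun h => hψ1 (by simp [h])
  have hN := card_mul_count_eq hψ A
  set N := Nat.card {p : (Fin d → F) × (Fin d → F) |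
        p.1 ∈ A ∧ p.2 ∈ A ∧ ∑ i, p.1 i * p.2 i = 0}
  set B : ℝ := (Fintype.card F : ℝ) ^ ((d : ℝ) / 2) * A.card with hB
  have hB0 : 0 ≤ B := by positivity
  have hq0 : (0 : ℝ) < Fintype.card F := by exact_mod_cast Fintype.card_pos
  rw [← Finset.add_sum_erase _ _ (Finset.mem_univ (0 : F))] at hN
  have h0 : ∑ x ∈ A, ∑ y ∈ A, ψ (0 * ∑ i, x i * y i) = (A.card : ℂ) ^ 2 := by
    simp [sq]
  rw [h0] at hN
  set E := ∑ s ∈ Finset.univ.erase (0 : F), ∑ x ∈ A, ∑ y ∈ A, ψ (s * ∑ i, x i * y i)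
  have hE : ‖E‖ ≤ Fintype.card F * B := by
    refine (norm_sum_le_of_le _ fun s hs =>
      norm_charSum_le hψ (Finset.ne_of_mem_erase hs) A).trans ?_
    rw [Finset.sum_const, nsmul_eq_mul]
    refine mul_le_mul_of_nonneg_right ?_ hB0
    exact_mod_cast Finset.card_le_univ _
  have hre : (Fintype.card F : ℝ) * N = (A.card : ℝ) ^ 2 + E.re := by
    have h := congrArg Complex.re hN
    rw [Complex.add_re] at h
    exact_mod_cast h
  have hEre := (abs_le.1 ((Complex.abs_re_le_norm E).trans hE)).1
  rw [ge_iff_le, sub_le_iff_le_add, div_le_iff₀ hq0]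
  linarith
end

section
/- For every integer d ≥ 3 there exist constants C > 0 and c > 0 such that for every odd prime power q and every set E ⊆ F_q^d with |E| ≥ C·q^{(d+2)/2} (as real numbers), the set of spreads generated by triples of distinct points of E, namely {s ∈ F_q : there exist distinct a, b, c ∈ E with ‖a−b‖·‖c−b‖ ≠ 0 and ((a−b)·(c−b))² = (1−s)·‖a−b‖·‖c−b‖}, has cardinality at least c·q. -/
/-!
Spreads depend only on directions, and the proof produces them with a single pinned vertex `b`
and a single pinned arm `a`. The engine is a second moment computation: for a set of `n` points
in `F_q^D`, the number of points on an affine hyperplane, over all equations `x ⬝ v = t`, has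
total variance `n (q^D - q^(D-1))` (`variance_eq`). An equation can be rescaled by the `q - 1`
nonzero scalars, so pairwise distinct hyperplanes with `x ≠ 0` carry total variance at most
`n q^(D-1)` (`variance_family`). It is used twice.

* Lifting `a` to `(‖a‖, a)` in `F_q^(d+1)` turns the cone `‖a - b‖ = 0` into a hyperplane, and
  distinct `b` give distinct hyperplanes. If every `b ∈ E` were at distance zero from more than
  half of `E`, the variance would force `|E| ≤ 6 q^(d/2)`. So some `b` has `‖a - b‖ ≠ 0` for at
  least half of the `a ∈ E` (`exists_center`).

* Up to squares there are two nonzero norms, so half of those `a - b` can be rescaled to one norm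
  `ρ` (`exists_normalization`), and keeping one vector per line costs a factor `q`
  (`exists_directions`). This leaves `n ≥ 2 q^(d/2)` pairwise non-proportional vectors of norm `ρ`.
  Averaging the variance over these vectors `x` as normals gives one `x` for which
  `∑_t (N(x, t) - n / q)² ≤ q^(d-1)`; each `t` not of the form `x ⬝ y` contributes `n² / q²`, so
  at least `3 q / 4` values of `t` occur (`exists_pin`). The spread of `x` and `y` is
  `1 - (x ⬝ y)² / ρ²`, and at most two values of `t` share a spread.
-/

open Finset Matrix

/-- For a nonzero `v`, the hyperplane `v^⊥` contains a fraction `1/q` of all vectors. -/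
lemma card_hyperplane {F : Type*} [Field F] [Fintype F] [DecidableEq F] {ι : Type*} [Fintype ι]
    [DecidableEq ι] (v : ι → F) (hv : v ≠ 0) :
    ((#{x : ι → F | x ⬝ᵥ v = 0} : ℕ) : ℝ) =
      (Fintype.card F : ℝ) ^ Fintype.card ι / Fintype.card F := by
  have hq : (Fintype.card F : ℝ) ≠ 0 := by exact_mod_cast Fintype.card_ne_zero
  let f : Module.Dual F (ι → F) := dotProductBilin F F v
  have hf : f ≠ 0 := by
    intro h
    apply hv
    refine dotProduct_eq_zero v fun w => ?_
    exact congrArg (fun g : Module.Dual F (ι → F) => g w) h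
  have h1 := Module.Dual.finrank_ker_add_one_of_ne_zero hf
  have h2 := Module.natCard_eq_pow_finrank (K := F) (V := LinearMap.ker f)
  have h3 : #{x : ι → F | x ⬝ᵥ v = 0} = Nat.card (LinearMap.ker f) := by
    rw [← Fintype.card_subtype, ← Nat.card_eq_fintype_card]
    refine Nat.card_congr (Equiv.subtypeEquivRight fun x => ?_)
    rw [LinearMap.mem_ker, dotProduct_comm]
    rfl
  rw [Module.finrank_fintype_fun_eq_card] at h1
  rw [h3, h2, Nat.card_eq_fintype_card, ← h1, pow_succ]
  push_cast
  field_simp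

/-- Second moment over all affine hyperplanes `{v | x ⬝ᵥ v = t}` of the number of points of a
finite family lying on them. -/
lemma variance_eq {F : Type*} [Field F] [Fintype F] [DecidableEq F] {ι : Type*} [Fintype ι]
    [DecidableEq ι] {α : Type*} [DecidableEq α] (A : Finset α) (p : α → ι → F)
    (hp : ∀ a ∈ A, ∀ a' ∈ A, p a = p a' → a = a') :
    ∑ x : ι → F, ∑ t : F,
        ((#{a ∈ A | x ⬝ᵥ p a = t} : ℝ) - (#A : ℝ) / Fintype.card F) ^ 2 =
      #A * ((Fintype.card F : ℝ) ^ Fintype.card ι * (1 - 1 / Fintype.card F)) := by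
  set q : ℝ := (Fintype.card F : ℝ) with hqdef
  set D := Fintype.card ι
  have hq : q ≠ 0 := by rw [hqdef]; exact_mod_cast Fintype.card_ne_zero
  have hN : ∀ x : ι → F, ∑ t : F, (#{a ∈ A | x ⬝ᵥ p a = t} : ℝ) = #A := by
    intro x
    exact_mod_cast (card_eq_sum_card_fiberwise (s := A) (t := univ)
      (f := fun a => x ⬝ᵥ p a) (by simp)).symm
  have hN2 : ∀ x : ι → F, ∑ t : F, (#{a ∈ A | x ⬝ᵥ p a = t} : ℝ) ^ 2 =
      ∑ a ∈ A, ∑ a' ∈ A, if x ⬝ᵥ (p a - p a') = 0 then 1 else 0 := by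
    intro x
    simp_rw [card_filter, sq]
    push_cast
    simp_rw [sum_mul_sum]
    rw [sum_comm]
    refine sum_congr rfl fun a _ => ?_
    rw [sum_comm]
    refine sum_congr rfl fun a' _ => ?_
    simp only [ite_mul, one_mul, zero_mul]
    rw [sum_ite_eq]
    simp [dotProduct_sub, sub_eq_zero, eq_comm]
  have hS2 : ∑ x : ι → F, ∑ t : F, (#{a ∈ A | x ⬝ᵥ p a = t} : ℝ) ^ 2 =
      #A * q ^ D + ((#A : ℝ) ^ 2 - #A) * (q ^ D / q) := by
    simp_rw [hN2]
    rw [sum_comm]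
    have : ∀ a ∈ A, ∑ x : ι → F, ∑ a' ∈ A, (if x ⬝ᵥ (p a - p a') = 0 then (1 : ℝ) else 0) =
        q ^ D + ((#A : ℝ) - 1) * (q ^ D / q) := by
      intro a ha
      rw [sum_comm, ← add_sum_erase A _ ha]
      congr 1
      · simp [D, q]
      · rw [sum_congr rfl (g := fun _ => q ^ D / q), sum_const, card_erase_of_mem ha, nsmul_eq_mul,
          Nat.cast_sub (card_pos.2 ⟨a, ha⟩)]
        · simp
        · intro a' ha'
          rw [mem_erase] at ha'
          rw [← card_hyperplane (p a - p a')
            (sub_ne_zero.2 fun h => ha'.1 (hp a ha a' ha'.2 h).symm), card_filter]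
          push_cast
          rfl
    rw [sum_congr rfl this, sum_const, nsmul_eq_mul]
    ring
  have hx : ∀ x : ι → F, ∑ t : F, ((#{a ∈ A | x ⬝ᵥ p a = t} : ℝ) - (#A : ℝ) / q) ^ 2 =
      ∑ t : F, (#{a ∈ A | x ⬝ᵥ p a = t} : ℝ) ^ 2 - (#A : ℝ) ^ 2 / q := by
    intro x
    simp_rw [sub_sq, sum_add_distrib, sum_sub_distrib, ← sum_mul, ← mul_sum, hN]
    rw [sum_const, card_univ, nsmul_eq_mul, ← hqdef]
    field_simp
    ring
  simp_rw [hx]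
  rw [sum_sub_distrib, hS2, sum_const, card_univ, nsmul_eq_mul, Fintype.card_fun]
  push_cast
  rw [← hqdef]
  field_simp
  ring

/-- A family of pairwise distinct (up to scaling of the equation) hyperplanes sees only a
`1/(q-1)` share of the total variance, since rescaling `(x, t)` does not change the hyperplane. -/
lemma variance_family {F : Type*} [Field F] [Fintype F] [DecidableEq F] {ι : Type*} [Fintype ι]
    [DecidableEq ι] {α β : Type*} [DecidableEq α] (A : Finset α) (p : α → ι → F)
    (hp : ∀ a ∈ A, ∀ a' ∈ A, p a = p a' → a = a')
    (H : Finset β) (x : β → ι → F) (τ : β → F)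
    (hH : ∀ h ∈ H, ∀ h' ∈ H, ∀ l : Fˣ,
      (l : F) • x h = x h' → (l : F) * τ h = τ h' → l = 1 ∧ h = h') :
    ∑ h ∈ H, ((#{a ∈ A | x h ⬝ᵥ p a = τ h} : ℝ) - (#A : ℝ) / Fintype.card F) ^ 2 ≤
      #A * ((Fintype.card F : ℝ) ^ Fintype.card ι / Fintype.card F) := by
  have hV := variance_eq A p hp
  set q : ℝ := (Fintype.card F : ℝ) with hqdef
  have hq1 : 1 < q := by rw [hqdef]; exact_mod_cast Fintype.one_lt_card
  let f : (ι → F) × F → ℝ := fun z => ((#{a ∈ A | z.1 ⬝ᵥ p a = z.2} : ℝ) - (#A : ℝ) / q) ^ 2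
  have hscale : ∀ (l : Fˣ) (y : ι → F) (t : F), f ((l : F) • y, (l : F) * t) = f (y, t) := by
    intro l y t
    simp [f, smul_dotProduct]
  have key : ∑ z ∈ (univ : Finset Fˣ) ×ˢ H, f ((z.1 : F) • x z.2, (z.1 : F) * τ z.2) ≤
      ∑ z, f z := by
    have hinj : Set.InjOn (fun z : Fˣ × β => (((z.1 : F) • x z.2, (z.1 : F) * τ z.2) :
        (ι → F) × F)) ((univ : Finset Fˣ) ×ˢ H : Finset (Fˣ × β)) := by
      rintro ⟨l, h⟩ h1 ⟨m, h'⟩ h2 he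
      simp only [coe_product, Set.mem_prod, coe_univ, Set.mem_univ, true_and, mem_coe] at h1 h2
      simp only [Prod.mk.injEq] at he
      obtain ⟨h3, h4⟩ := hH h h1 h' h2 (m⁻¹ * l)
        (by rw [Units.val_mul, mul_smul, he.1, smul_smul]; simp)
        (by rw [Units.val_mul, mul_assoc, he.2, ← mul_assoc]; simp)
      rw [inv_mul_eq_one] at h3
      rw [h3, h4]
    rw [← sum_image (f := f) hinj]
    exact sum_le_univ_sum_of_nonneg fun z => sq_nonneg _
  rw [sum_product] at key
  simp_rw [hscale] at key
  rw [sum_const, card_univ, Fintype.card_units, nsmul_eq_mul,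
    Nat.cast_sub Fintype.card_pos, Fintype.sum_prod_type] at key
  have h5 : ∑ z : ι → F, ∑ t : F, f (z, t) = _ := hV
  rw [h5, ← hqdef, Nat.cast_one] at key
  have h6 : (#A : ℝ) * (q ^ Fintype.card ι * (1 - 1 / q)) =
      (q - 1) * (#A * (q ^ Fintype.card ι / q)) := by
    have : q ≠ 0 := by positivity
    field_simp
  rw [h6] at key
  exact le_of_mul_le_mul_left key (by linarith)

/-- Some point of a large set is at zero distance from at most half of it. The points
`a` with `‖a - b‖ = 0` are those whose lifts `(‖a‖, a)` to the paraboloid lie on the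
hyperplane `(1, -2b) ⬝ z = -‖b‖`. -/
lemma exists_center {F : Type*} [Field F] [Fintype F] [DecidableEq F] {d : ℕ}
    (h2 : (2 : F) ≠ 0) (hq3 : (3 : ℝ) ≤ Fintype.card F) (E : Finset (Fin d → F))
    (hE : 36 * (Fintype.card F : ℝ) ^ d < (#E : ℝ) ^ 2) :
    ∃ b ∈ E, (#E : ℝ) / 2 ≤ #{a ∈ E | (a - b) ⬝ᵥ (a - b) ≠ 0} := by
  have hV := variance_family E (fun a => (Fin.cons (a ⬝ᵥ a) a : Fin (d + 1) → F))
    (fun a _ a' _ h => (Fin.cons_injective2 h).2) E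
    (fun b => (Fin.cons 1 ((-2 : F) • b) : Fin (d + 1) → F)) (fun b => - (b ⬝ᵥ b)) (by
      intro h _ h' _ l hl _
      have h0 := congrFun hl 0
      simp only [Pi.smul_apply, Fin.cons_zero, smul_eq_mul, mul_one, Units.val_eq_one] at h0
      refine ⟨h0, ?_⟩
      rw [h0, Units.val_one, one_smul] at hl
      exact smul_right_injective _ (neg_ne_zero.2 h2) (Fin.cons_injective2 hl).2)
  set q : ℝ := (Fintype.card F : ℝ)
  have hdot : ∀ a b : Fin d → F,
      ((Fin.cons 1 ((-2 : F) • b) : Fin (d + 1) → F) ⬝ᵥ (Fin.cons (a ⬝ᵥ a) a : Fin (d + 1) → F)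
        = - (b ⬝ᵥ b)) ↔ (a - b) ⬝ᵥ (a - b) = 0 := by
    intro a b
    have h1 : (Fin.cons 1 ((-2 : F) • b) : Fin (d + 1) → F) ⬝ᵥ
        (Fin.cons (a ⬝ᵥ a) a : Fin (d + 1) → F) = a ⬝ᵥ a - 2 * (a ⬝ᵥ b) := by
      rw [dotProduct, Fin.sum_univ_succ]
      simp only [Fin.cons_zero, Fin.cons_succ, one_mul]
      change a ⬝ᵥ a + ((-2 : F) • b) ⬝ᵥ a = _
      rw [smul_dotProduct, dotProduct_comm b a, smul_eq_mul]
      ring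
    have h3 : (a - b) ⬝ᵥ (a - b) = a ⬝ᵥ a - 2 * (a ⬝ᵥ b) + b ⬝ᵥ b := by
      rw [sub_dotProduct, dotProduct_sub, dotProduct_sub, dotProduct_comm b a]
      ring
    rw [h1, h3, eq_neg_iff_add_eq_zero]
  simp_rw [hdot] at hV
  by_contra! hcon
  have hlow : ∀ b ∈ E, (#E : ℝ) ^ 2 / 36 ≤
      ((#{a ∈ E | (a - b) ⬝ᵥ (a - b) = 0} : ℝ) - #E / q) ^ 2 := by
    intro b hb
    have h1 := hcon b hb
    have h3 : (#{a ∈ E | (a - b) ⬝ᵥ (a - b) = 0} : ℝ) + #{a ∈ E | (a - b) ⬝ᵥ (a - b) ≠ 0} = #E := by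
      exact_mod_cast card_filter_add_card_filter_not (s := E) (fun a => (a - b) ⬝ᵥ (a - b) = 0)
    have h4 : (#E : ℝ) / q ≤ #E / 3 := by gcongr
    have h5 : (0 : ℝ) ≤ #E := by positivity
    have h6 : (#E : ℝ) / 6 ≤ (#{a ∈ E | (a - b) ⬝ᵥ (a - b) = 0} : ℝ) - #E / q := by linarith
    calc (#E : ℝ) ^ 2 / 36 = (#E / 6) ^ 2 := by ring
      _ ≤ _ := by gcongr
  have h7 := (card_nsmul_le_sum _ _ _ hlow).trans hV
  have hq0 : q ≠ 0 := by positivity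
  rw [nsmul_eq_mul, Fintype.card_fin, pow_succ q d, mul_div_cancel_right₀ _ hq0] at h7
  have hpos : (0 : ℝ) < #E := by
    rcases Nat.eq_zero_or_pos #E with h | h
    · rw [h] at hE
      have : 0 ≤ 36 * q ^ d := by positivity
      norm_num at hE
      linarith
    · exact_mod_cast h
  have := le_of_mul_le_mul_left h7 hpos
  linarith

/-- At least half of a finite set on which `N ≠ 0` can be rescaled so that `N`, viewed as a
quadratic form, takes one common value `ρ`: up to squares there are only two classes of
nonzero elements. -/
lemma exists_normalization {F : Type*} [Field F] [Fintype F] [DecidableEq F] {α : Type*}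
    [DecidableEq α] (M : Finset α) (N : α → F) (hN : ∀ a ∈ M, N a ≠ 0) :
    ∃ M' ⊆ M, (#M : ℝ) / 2 ≤ #M' ∧ ∃ ρ : F, ρ ≠ 0 ∧ ∃ κ : α → F, ∀ a ∈ M', κ a ^ 2 * N a = ρ := by
  classical
  have hsum := card_filter_add_card_filter_not (s := M) (fun a => IsSquare (N a))
  have hsum' : (#{a ∈ M | IsSquare (N a)} : ℝ) + #{a ∈ M | ¬ IsSquare (N a)} = #M := by
    exact_mod_cast hsum
  have hroot : ∀ M' ⊆ M, ∀ ρ : F, (∀ a ∈ M', IsSquare (ρ / N a)) →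
      ∃ κ : α → F, ∀ a ∈ M', κ a ^ 2 * N a = ρ := by
    intro M' hM' ρ h
    choose! κ hκ using h
    refine ⟨κ, fun a ha => ?_⟩
    rw [sq, ← hκ a ha, div_mul_cancel₀ _ (hN a (hM' ha))]
  rcases le_total ((#M : ℝ) / 2) #{a ∈ M | IsSquare (N a)} with h | h
  · refine ⟨_, filter_subset _ _, h, 1, one_ne_zero, hroot _ (filter_subset _ _) 1 ?_⟩
    intro a ha
    exact IsSquare.one.div (mem_filter.1 ha).2
  · rcases eq_empty_or_nonempty {a ∈ M | ¬ IsSquare (N a)} with h0 | ⟨a₀, ha₀⟩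
    · rw [h0] at hsum'
      simp only [card_empty, Nat.cast_zero, add_zero] at hsum'
      refine ⟨∅, empty_subset _, ?_, 1, one_ne_zero, fun _ => 0, by simp⟩
      simp only [card_empty, Nat.cast_zero]
      linarith
    · rw [mem_filter] at ha₀
      refine ⟨_, filter_subset (fun a => ¬ IsSquare (N a)) _, by linarith, N a₀, hN _ ha₀.1,
        hroot _ (filter_subset _ _) _ ?_⟩
      intro a ha
      rw [mem_filter] at ha
      have h1 := hN _ ha.1
      have h2 := hN _ ha₀.1
      rw [← quadraticChar_one_iff_isSquare (div_ne_zero h2 h1), div_eq_mul_inv, map_mul,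
        quadraticChar_neg_one_iff_not_isSquare.2 ha₀.2,
        quadraticChar_neg_one_iff_not_isSquare.2 (by rw [isSquare_inv]; exact ha.2)]
      norm_num

/-- Keeping one `a` for each span of `a - b` retains at least a fraction `1/q` of a set, because
a line through `b` has `q` points. -/
lemma exists_directions {F : Type*} [Field F] [Fintype F] [DecidableEq F] {d : ℕ}
    (M : Finset (Fin d → F)) (b : Fin d → F) :
    ∃ T ⊆ M, (#M : ℝ) / Fintype.card F ≤ #T ∧
      ∀ a ∈ T, ∀ c ∈ T, ∀ l : Fˣ, (l : F) • (a - b) = c - b → a = c := by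
  classical
  let f : (Fin d → F) → Submodule F (Fin d → F) := fun a => Submodule.span F {a - b}
  obtain ⟨T, hTM, hinj, himg⟩ : ∃ T ⊆ M, Set.InjOn f T ∧ T.image f = M.image f := by
    obtain ⟨T, hT, h2, h3⟩ := exists_subset_injOn_image_eq_of_surjOn (f := f) (t := M.image f) M
      (by rw [Set.SurjOn, coe_image])
    exact ⟨T, by exact_mod_cast hT, h2, h3⟩
  refine ⟨T, hTM, ?_, ?_⟩
  · rw [div_le_iff₀ (by exact_mod_cast Fintype.card_pos)]
    have h1 : #M ≤ Fintype.card F * #(M.image f) := by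
      refine card_le_mul_card_image M _ fun L hL => ?_
      obtain ⟨a, ha, rfl⟩ := mem_image.1 hL
      calc #{x ∈ M | f x = f a} ≤ #((univ : Finset F).image fun z => z • (a - b) + b) := by
            refine card_le_card fun x hx => ?_
            rw [mem_filter] at hx
            obtain ⟨z, hz⟩ := Submodule.span_singleton_eq_span_singleton.1 hx.2.symm
            refine mem_image.2 ⟨z, mem_univ _, ?_⟩
            rw [← Units.smul_def, hz, sub_add_cancel]
        _ ≤ _ := card_image_le
    rw [← himg, card_image_of_injOn hinj, mul_comm] at h1
    exact_mod_cast h1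
  · intro a ha c hc l hl
    exact hinj ha hc (Submodule.span_singleton_eq_span_singleton.2 ⟨l, hl⟩)

/-- If many pairwise non-proportional vectors lie on one sphere of nonzero radius, then one of
them has dot products with the family filling three quarters of the field. -/
lemma exists_pin {F : Type*} [Field F] [Fintype F] [DecidableEq F] {d : ℕ} {α : Type*}
    [DecidableEq α] (T : Finset α) (p : α → Fin d → F) (hp0 : ∀ a ∈ T, p a ≠ 0)
    (hp : ∀ a ∈ T, ∀ c ∈ T, ∀ l : Fˣ, (l : F) • p a = p c → a = c)
    (hpos : 0 < #T) (hT : 4 * (Fintype.card F : ℝ) ^ d ≤ (#T : ℝ) ^ 2) :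
    ∃ a ∈ T, 3 / 4 * (Fintype.card F : ℝ) ≤ #(T.image fun c => p a ⬝ᵥ p c) := by
  have hV := variance_family T p (fun a ha c hc h => hp a ha c hc 1 (by simpa using h))
    (T ×ˢ (univ : Finset F)) (fun z => p z.1) (fun z => z.2) (by
      rintro ⟨a, t⟩ h ⟨c, t'⟩ h' l hl ht
      simp only [mem_product, mem_univ, and_true] at h h' hl ht
      obtain rfl := hp a h c h' l hl
      have h1 : ((l : F) - 1) • p a = 0 := by rw [sub_smul, hl, one_smul, sub_self]
      have h2 : (l : F) = 1 := sub_eq_zero.1 ((smul_eq_zero.1 h1).resolve_right (hp0 a h))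
      rw [h2, one_mul] at ht
      exact ⟨Units.ext h2, by rw [ht]⟩)
  rw [sum_product, Fintype.card_fin] at hV
  set q : ℝ := (Fintype.card F : ℝ) with hqdef
  have hq : 0 < q := by rw [hqdef]; exact_mod_cast Fintype.card_pos
  have hn : (0 : ℝ) < #T := by exact_mod_cast hpos
  obtain ⟨a, ha, hVa⟩ : ∃ a ∈ T,
      ∑ t : F, ((#{c ∈ T | p a ⬝ᵥ p c = t} : ℝ) - #T / q) ^ 2 ≤ q ^ d / q := by
    refine exists_le_of_sum_le (card_pos.1 hpos) ?_
    rw [sum_const, nsmul_eq_mul]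
    exact hV
  refine ⟨a, ha, ?_⟩
  set I := T.image fun c => p a ⬝ᵥ p c with hI
  have h1 : ∑ t ∈ Iᶜ, ((#T : ℝ) / q) ^ 2 ≤ q ^ d / q := by
    refine le_trans ?_ (hVa.trans' (sum_le_univ_sum_of_nonneg (s := Iᶜ) fun t => sq_nonneg _))
    refine sum_le_sum fun t ht => ?_
    have : #{c ∈ T | p a ⬝ᵥ p c = t} = 0 := by
      rw [card_eq_zero, filter_eq_empty_iff]
      intro c hc hct
      exact mem_compl.1 ht (mem_image.2 ⟨c, hc, hct⟩)
    rw [this]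
    simp
  rw [sum_const, nsmul_eq_mul, card_compl, Nat.cast_sub (card_le_univ I), ← hqdef, div_pow,
    mul_div_assoc', div_le_div_iff₀ (by positivity) hq] at h1
  by_contra! hcon
  have h2 : q / 4 < q - #I := by linarith
  have h3 : q / 4 * (#T : ℝ) ^ 2 < (q - #I) * (#T : ℝ) ^ 2 := by gcongr
  have h4 : q / 4 * (4 * q ^ d) ≤ q / 4 * (#T : ℝ) ^ 2 := by gcongr
  have h5 : (q / 4 * (4 * q ^ d)) * q < ((q - #I) * (#T : ℝ) ^ 2) * q :=
    mul_lt_mul_of_pos_right (h4.trans_lt h3) hq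
  have h6 : (q / 4 * (4 * q ^ d)) * q = q ^ d * q ^ 2 := by ring
  linarith


/-- For every integer `d ≥ 3` there exist constants `C > 0` and `c > 0`
such that for every odd prime power `q` and every set `E ⊆ F_q^d` with
`|E| ≥ C * q^((d+2)/2)` (as reals), the set of spreads generated by triples of distinct
points of `E` has cardinality at least `c * q`. -/
theorem many_spreads (d : ℕ) (hd : 3 ≤ d) :
    ∃ C > (0 : ℝ), ∃ c > (0 : ℝ),
      ∀ q : ℕ, (∃ p n : ℕ, p.Prime ∧ Odd p ∧ 0 < n ∧ q = p ^ n) →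
      ∀ (F : Type) [Field F] [Fintype F], Fintype.card F = q →
      ∀ E : Finset (Fin d → F), (E.card : ℝ) ≥ C * (q : ℝ) ^ (((d : ℝ) + 2) / 2) →
        (Nat.card {s : F | ∃ a ∈ E, ∃ b ∈ E, ∃ c' ∈ E, a ≠ b ∧ b ≠ c' ∧ a ≠ c' ∧
            (∑ i, (a i - b i) * (a i - b i)) * (∑ i, (c' i - b i) * (c' i - b i)) ≠ 0 ∧
            (∑ i, (a i - b i) * (c' i - b i)) ^ 2 =
              (1 - s) * ((∑ i, (a i - b i) * (a i - b i)) *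
                (∑ i, (c' i - b i) * (c' i - b i)))} : ℝ) ≥ c * q := by
  refine ⟨8, by norm_num, 1 / 6, by norm_num, ?_⟩
  rintro q ⟨pr, n, hpr, hodd, -, rfl⟩ F _ _ hF E hE
  classical
  have hqodd : Odd (Fintype.card F) := hF ▸ hodd.pow
  rw [← hF] at hE ⊢
  have hq3' : 3 ≤ Fintype.card F := by
    have := Fintype.one_lt_card (α := F)
    obtain ⟨k, hk⟩ := hqodd
    omega
  have h2 : (2 : F) ≠ 0 := by
    apply Ring.two_ne_zero
    intro h
    have := FiniteField.even_card_of_char_two h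
    rw [← Nat.not_even_iff_odd] at hqodd
    exact hqodd (Nat.even_iff.2 this)
  set q : ℝ := (Fintype.card F : ℝ) with hqdef
  have hq3 : 3 ≤ q := by rw [hqdef]; exact_mod_cast hq3'
  have hE2 : 64 * q ^ (d + 2) ≤ (#E : ℝ) ^ 2 := by
    have h1 : (8 * q ^ (((d : ℝ) + 2) / 2)) ^ 2 = 64 * q ^ (d + 2) := by
      rw [mul_pow, ← Real.rpow_natCast (q ^ (((d : ℝ) + 2) / 2)), ← Real.rpow_mul (by positivity),
        ← Real.rpow_natCast q]
      norm_num
    rw [← h1]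
    gcongr
  have hqd : 0 < q ^ d := by positivity
  have hq2 : 9 ≤ q ^ 2 := by nlinarith
  obtain ⟨b, hb, hM⟩ := exists_center h2 hq3 E (by rw [← hqdef]; nlinarith [pow_add q d 2])
  set M := {a ∈ E | (a - b) ⬝ᵥ (a - b) ≠ 0} with hMdef
  obtain ⟨M', hM'M, hM', ρ, hρ, κ, hκ⟩ :=
    exists_normalization M (fun a => (a - b) ⬝ᵥ (a - b)) fun a ha => (mem_filter.1 ha).2
  obtain ⟨T, hTM', hT, hdir⟩ := exists_directions M' b
  rw [← hqdef] at hT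
  have hTcard : (#E : ℝ) / (4 * q) ≤ #T := by
    refine le_trans ?_ hT
    rw [div_mul_eq_div_div]
    gcongr
    linarith
  have hT2 : 4 * q ^ d ≤ (#T : ℝ) ^ 2 := by
    calc 4 * q ^ d = 64 * q ^ (d + 2) / (4 * q) ^ 2 := by
          rw [pow_add]
          field_simp
          norm_num
      _ ≤ (#E : ℝ) ^ 2 / (4 * q) ^ 2 := by gcongr
      _ = ((#E : ℝ) / (4 * q)) ^ 2 := by rw [div_pow]
      _ ≤ _ := by gcongr
  have hpos : 0 < #T := by
    rcases Nat.eq_zero_or_pos #T with h | h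
    · rw [h] at hT2
      norm_num at hT2
      linarith
    · exact h
  have hκ0 : ∀ a ∈ T, κ a ≠ 0 := by
    intro a ha h
    apply hρ
    rw [← hκ a (hTM' ha), h]
    ring
  have hTE : ∀ a ∈ T, a ∈ E ∧ (a - b) ⬝ᵥ (a - b) ≠ 0 := fun a ha =>
    mem_filter.1 (hM'M (hTM' ha))
  obtain ⟨a, ha, hI⟩ := exists_pin T (fun a => κ a • (a - b))
    (by
      intro a ha h
      rcases smul_eq_zero.1 h with h | h
      · exact hκ0 a ha h
      · exact (hTE a ha).2 (by rw [h, zero_dotProduct]))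
    (by
      intro a ha c hc l hl
      refine hdir a ha c hc ((Units.mk0 _ (hκ0 c hc))⁻¹ * l * Units.mk0 _ (hκ0 a ha)) ?_
      simp only [Units.val_mul, Units.val_inv_eq_inv_val, Units.val_mk0]
      rw [mul_smul, mul_smul, hl, smul_smul, inv_mul_cancel₀ (hκ0 c hc), one_smul])
    hpos hT2
  rw [← hqdef] at hI
  set I := T.image fun c => (κ a • (a - b)) ⬝ᵥ (κ c • (c - b)) with hIdef
  set S := {s : F | ∃ a ∈ E, ∃ b ∈ E, ∃ c' ∈ E, a ≠ b ∧ b ≠ c' ∧ a ≠ c' ∧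
            (∑ i, (a i - b i) * (a i - b i)) * (∑ i, (c' i - b i) * (c' i - b i)) ≠ 0 ∧
            (∑ i, (a i - b i) * (c' i - b i)) ^ 2 =
              (1 - s) * ((∑ i, (a i - b i) * (a i - b i)) *
                (∑ i, (c' i - b i) * (c' i - b i)))} with hS
  have hne : ∀ c ∈ T, c ≠ b := by
    rintro c hc rfl
    exact (hTE c hc).2 (by rw [sub_self, zero_dotProduct])
  -- The value `ρ` is the dot product of the pinned vector with itself, which must be discarded.
  have hmaps : ∀ t ∈ I.erase ρ, 1 - t ^ 2 / ρ ^ 2 ∈ S.toFinset := by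
    intro t ht
    obtain ⟨htρ, htI⟩ := mem_erase.1 ht
    obtain ⟨c, hc, rfl⟩ := mem_image.1 htI
    have h3 : κ a ^ 2 * ((a - b) ⬝ᵥ (a - b)) = ρ := hκ a (hTM' ha)
    have h4 : κ c ^ 2 * ((c - b) ⬝ᵥ (c - b)) = ρ := hκ c (hTM' hc)
    have hdot : (κ a • (a - b)) ⬝ᵥ (κ c • (c - b)) = κ a * κ c * ((a - b) ⬝ᵥ (c - b)) := by
      rw [smul_dotProduct, dotProduct_smul, smul_eq_mul, smul_eq_mul, mul_assoc]
    rw [Set.mem_toFinset]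
    refine ⟨a, (hTE a ha).1, b, hb, c, (hTE c hc).1, hne a ha, (hne c hc).symm, ?_,
      mul_ne_zero (hTE a ha).2 (hTE c hc).2, ?_⟩
    · rintro rfl
      apply htρ
      rw [hdot, ← h3]
      ring
    · change ((a - b) ⬝ᵥ (c - b)) ^ 2 =
        (1 - (1 - _)) * (((a - b) ⬝ᵥ (a - b)) * ((c - b) ⬝ᵥ (c - b)))
      rw [hdot, sub_sub_cancel, div_mul_eq_mul_div, eq_div_iff (pow_ne_zero 2 hρ)]
      nth_rewrite 1 [sq ρ]
      nth_rewrite 1 [← h3]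
      rw [← h4]
      ring
  have hfib : #(I.erase ρ) ≤ 2 * #S.toFinset := by
    refine card_le_mul_card_image_of_maps_to (f := fun t => 1 - t ^ 2 / ρ ^ 2) hmaps 2 ?_
    intro s _
    rcases eq_empty_or_nonempty {t ∈ I.erase ρ | 1 - t ^ 2 / ρ ^ 2 = s} with h | ⟨t₀, ht₀⟩
    · rw [h]; simp
    · refine (card_le_card (t := {t₀, -t₀}) fun t ht => ?_).trans card_le_two
      have h5 := (mem_filter.1 ht).2.trans (mem_filter.1 ht₀).2.symm
      rw [sub_right_inj, div_left_inj' (pow_ne_zero 2 hρ), sq_eq_sq_iff_eq_or_eq_neg] at h5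
      simpa using h5
  have h6 : #I ≤ #(I.erase ρ) + 1 := by
    have := pred_card_le_card_erase (s := I) (a := ρ)
    omega
  have h7 : (#I : ℝ) ≤ 2 * #S.toFinset + 1 := by exact_mod_cast h6.trans (by omega)
  rw [Nat.card_eq_card_toFinset]
  linarith
end
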